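/- arXiv:1701.06611 — 5 statements merged into one kernel-verified Lean document; each statement's English description precedes it below -/
import Mathlib

section
/- Let Ω ⊆ ℝ^N be a bounded open set, p ≥ 2 a real number and q = p/(p−1). Let B : L^q(Ω) → L^p(Ω) be a positive continuous linear operator and g ∈ L^p(Ω). Suppose (y_k) and (z_k) are sequences in L^p(Ω) such that y_k → y₀ strongly in L^p(Ω), z_k → z₀ weakly in L^p(Ω), and for every k the Hammerstein equation z_k + B(|y_k|^{p−2}y_k + |z_k|^{p−2}z_k) = g holds in L^p(Ω). Then the limit pair satisfies z₀ + B(|y₀|^{p−2}y₀ + |z₀|^{p−2}z₀) = g. -/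
open MeasureTheory Filter Topology

lemma ham_mono (s : ℝ) (hs : 0 ≤ s) (a b : ℝ) :
    (2 * 2 ^ s)⁻¹ * |a - b| ^ (s + 2) ≤ (a - b) * (|a| ^ s * a - |b| ^ s * b) := by
  have key : (a - b) * (|a| ^ s * a - |b| ^ s * b) =
      (|a| ^ s + |b| ^ s) / 2 * |a - b| ^ 2
        + (|a| ^ s - |b| ^ s) * (|a| - |b|) * (|a| + |b|) / 2 := by
    have h1 : (|a| - |b|) * (|a| + |b|) = a ^ 2 - b ^ 2 := by
      rw [← sq_abs a, ← sq_abs b]; ring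
    rw [mul_assoc (|a| ^ s - |b| ^ s), h1, sq_abs]; ring
  have hm : 0 ≤ (|a| ^ s - |b| ^ s) * (|a| - |b|) := by
    rcases le_total |a| |b| with h | h
    · have := Real.rpow_le_rpow (abs_nonneg a) h hs
      nlinarith
    · have := Real.rpow_le_rpow (abs_nonneg b) h hs
      exact mul_nonneg (by linarith) (by linarith)
  have hab : |a - b| ^ s ≤ 2 ^ s * (|a| ^ s + |b| ^ s) := by
    have h0 : |a - b| ≤ 2 * max |a| |b| := by
      have := abs_sub a b
      have := le_max_left |a| |b|
      have := le_max_right |a| |b|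
      linarith
    have h1 := Real.rpow_le_rpow (abs_nonneg _) h0 hs
    rw [Real.mul_rpow (by norm_num) (le_max_of_le_left (abs_nonneg a))] at h1
    refine h1.trans (mul_le_mul_of_nonneg_left ?_ (by positivity))
    have ha : 0 ≤ |a| ^ s := by positivity
    have hb : 0 ≤ |b| ^ s := by positivity
    rcases max_choice |a| |b| with h | h <;> rw [h] <;> linarith
  have h2 : |a - b| ^ (s + 2) = |a - b| ^ s * |a - b| ^ 2 := by
    rw [Real.rpow_add_of_nonneg (abs_nonneg _) hs (by norm_num)]
    norm_num
  rw [key, h2]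
  have h3 : 0 ≤ (|a| ^ s - |b| ^ s) * (|a| - |b|) * (|a| + |b|) / 2 := by positivity
  have h4 : (0:ℝ) < 2 ^ s := by positivity
  have h5 : (2 * 2 ^ s)⁻¹ * (|a - b| ^ s * |a - b| ^ 2) ≤
      (2 * 2 ^ s)⁻¹ * ((2 ^ s * (|a| ^ s + |b| ^ s)) * |a - b| ^ 2) := by gcongr
  have h6 : (2 * 2 ^ s)⁻¹ * ((2 ^ s * (|a| ^ s + |b| ^ s)) * |a - b| ^ 2) =
      (|a| ^ s + |b| ^ s) / 2 * |a - b| ^ 2 := by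
    field_simp
  linarith

lemma ham_bern (s : ℝ) (hs : 0 ≤ s) (x y : ℝ) (hy : 0 ≤ y) (hxy : y ≤ x) :
    (x ^ s - y ^ s) * y ≤ (s + 1) * x ^ s * (x - y) := by
  rcases eq_or_lt_of_le (hy.trans hxy) with h | hx
  · have : y = 0 := by linarith
    subst this; rw [← h]; simp
  have h1 := one_add_mul_self_le_rpow_one_add (s := y / x - 1) (p := s + 1)
    (by have := div_nonneg hy hx.le; linarith) (by linarith)
  have e : (1 + (y / x - 1)) ^ (s + 1) = y ^ s * y / (x ^ s * x) := by
    rw [add_sub_cancel, Real.div_rpow hy hx.le, Real.rpow_add_of_nonneg hy hs zero_le_one,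
      Real.rpow_add_of_nonneg hx.le hs zero_le_one, Real.rpow_one, Real.rpow_one]
  rw [e, le_div_iff₀ (by positivity)] at h1
  have e2 : (1 + (s + 1) * (y / x - 1)) * (x ^ s * x) =
      x ^ s * x + (s + 1) * x ^ s * (y - x) := by
    field_simp
  rw [e2] at h1
  have h2 : x ^ s * y ≤ x ^ s * x := by gcongr
  nlinarith

lemma ham_lip_aux (s : ℝ) (hs : 0 ≤ s) (a b : ℝ) (h : |b| ≤ |a|) :
    |(|a| ^ s * a - |b| ^ s * b)| ≤ (s + 2) * |a - b| * (|a| + |b|) ^ s := by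
  have e : |a| ^ s * a - |b| ^ s * b = |a| ^ s * (a - b) + (|a| ^ s - |b| ^ s) * b := by ring
  have hB := ham_bern s hs |a| |b| (abs_nonneg _) h
  have hm := Real.rpow_le_rpow (abs_nonneg b) h hs
  have hM : |a| ^ s ≤ (|a| + |b|) ^ s :=
    Real.rpow_le_rpow (abs_nonneg a) (by linarith [abs_nonneg b]) hs
  have ht : |a| - |b| ≤ |a - b| := abs_sub_abs_le_abs_sub a b
  have hA : 0 ≤ |a| ^ s := by positivity
  calc |(|a| ^ s * a - |b| ^ s * b)| ≤ |(|a| ^ s * (a - b))| + |((|a| ^ s - |b| ^ s) * b)| := by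
        rw [e]; exact abs_add_le _ _
    _ = |a| ^ s * |a - b| + (|a| ^ s - |b| ^ s) * |b| := by
        rw [abs_mul, abs_mul, abs_of_nonneg hA, abs_of_nonneg (sub_nonneg.2 hm)]
    _ ≤ |a| ^ s * |a - b| + (s + 1) * |a| ^ s * |a - b| := by
        have : (s + 1) * |a| ^ s * (|a| - |b|) ≤ (s + 1) * |a| ^ s * |a - b| := by gcongr
        linarith
    _ = (s + 2) * |a - b| * |a| ^ s := by ring
    _ ≤ _ := by gcongr

lemma ham_lip (s : ℝ) (hs : 0 ≤ s) (a b : ℝ) :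
    |(|a| ^ s * a - |b| ^ s * b)| ≤ (s + 2) * |a - b| * (|a| + |b|) ^ s := by
  rcases le_total |b| |a| with h | h
  · exact ham_lip_aux s hs a b h
  · have := ham_lip_aux s hs b a h
    rwa [abs_sub_comm, abs_sub_comm b a, add_comm |b|] at this

section
variable {α : Type*} [MeasurableSpace α] {μ : Measure α}

lemma ham_memLp (p q : ℝ) (hp : 2 ≤ p) (hq : q = p / (p - 1))
    (u : Lp ℝ (ENNReal.ofReal p) μ) :
    MemLp (fun x => |u x| ^ (p - 2) * u x) (ENNReal.ofReal q) μ := by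
  have h := (Lp.memLp u).norm_rpow_div (ENNReal.ofReal (p - 1))
  rw [ENNReal.toReal_ofReal (by linarith), ← ENNReal.ofReal_div_of_pos (by linarith), ← hq] at h
  refine h.mono ?_ (ae_of_all _ fun x => ?_)
  · have hu := (Lp.aestronglyMeasurable u)
    exact ((hu.norm.aemeasurable.pow_const (p - 2)).mul hu.aemeasurable).aestronglyMeasurable
  · have e : p - 1 = (p - 2) + 1 := by ring
    rw [norm_mul, Real.norm_eq_abs, Real.norm_eq_abs, Real.norm_eq_abs, e,
      Real.rpow_add_of_nonneg (abs_nonneg _) (by linarith) zero_le_one, Real.rpow_one,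
      abs_mul, abs_abs]

lemma ham_norm_le (p q : ℝ) (hp : 2 ≤ p) (hq : q = p / (p - 1))
    [Fact (1 ≤ ENNReal.ofReal p)] [Fact (1 ≤ ENNReal.ofReal q)]
    (u v : Lp ℝ (ENNReal.ofReal p) μ) (U V : Lp ℝ (ENNReal.ofReal q) μ)
    (hU : U =ᵐ[μ] fun x => |u x| ^ (p - 2) * u x)
    (hV : V =ᵐ[μ] fun x => |v x| ^ (p - 2) * v x) :
    ‖U - V‖ ≤ p * ‖u - v‖ * (‖u‖ + ‖v‖) ^ (p - 2) := by
  rcases eq_or_lt_of_le hp with h2 | h2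
  · subst h2
    have hq' : q = 2 := by rw [hq]; norm_num
    subst hq'
    have hU' : U = u := by
      apply Lp.ext; filter_upwards [hU] with x hx; rw [hx]; simp
    have hV' : V = v := by
      apply Lp.ext; filter_upwards [hV] with x hx; rw [hx]; simp
    rw [hU', hV']; norm_num
    linarith [norm_nonneg (u - v)]
  have hs : 0 < p - 2 := by linarith
  set w : Lp ℝ (ENNReal.ofReal p) μ := |u| + |v| with hw
  have hwn : ‖w‖ ≤ ‖u‖ + ‖v‖ := by
    refine (norm_add_le _ _).trans ?_
    rw [norm_abs_eq_norm, norm_abs_eq_norm]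
  have hT : Real.HolderTriple p (p / (p - 2)) q :=
    ⟨by rw [hq]; field_simp; ring, by linarith, by positivity⟩
  haveI := hT.ennrealOfReal
  have hH := eLpNorm_le_eLpNorm_mul_eLpNorm'_of_norm (μ := μ) (p := ENNReal.ofReal p)
    (q := ENNReal.ofReal (p / (p - 2))) (r := ENNReal.ofReal q)
    (f := (u - v : Lp ℝ (ENNReal.ofReal p) μ)) (g := fun x => ‖w x‖ ^ (p - 2))
    (Lp.aestronglyMeasurable _)
    ((Lp.aestronglyMeasurable w).norm.aemeasurable.pow_const (p - 2)).aestronglyMeasurable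
    (fun a b => p * a * b) ⟨p, by linarith⟩ (ae_of_all _ fun x => by
      rw [norm_mul, norm_mul, Real.norm_of_nonneg (by linarith : 0 ≤ p)]; exact le_rfl)
  rw [eLpNorm_norm_rpow _ hs, ← ENNReal.ofReal_mul (by positivity),
    div_mul_cancel₀ _ hs.ne'] at hH
  have hle : eLpNorm (U - V : Lp ℝ (ENNReal.ofReal q) μ) (ENNReal.ofReal q) μ ≤
      eLpNorm (fun x => p * (u - v : Lp ℝ (ENNReal.ofReal p) μ) x * ‖w x‖ ^ (p - 2))
        (ENNReal.ofReal q) μ := by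
    apply eLpNorm_mono_ae
    filter_upwards [hU, hV, Lp.coeFn_sub U V, Lp.coeFn_sub u v, Lp.coeFn_add |u| |v|,
      Lp.coeFn_abs u, Lp.coeFn_abs v] with x h1 h2 h3 h4 h5 h6 h7
    have hwx : w x = |u x| + |v x| := by rw [hw, h5, Pi.add_apply, h6, h7]
    rw [h3, h4, Pi.sub_apply, Pi.sub_apply, h1, h2, hwx, norm_mul, norm_mul,
      Real.norm_of_nonneg (by linarith : 0 ≤ p)]
    have := ham_lip (p - 2) hs.le (u x) (v x)
    rw [sub_add_cancel] at this
    simp only [Real.norm_eq_abs]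
    rw [abs_of_nonneg (by positivity : 0 ≤ |u x| + |v x|),
      abs_of_nonneg (by positivity : 0 ≤ (|u x| + |v x|) ^ (p - 2))]
    exact this
  have hfin := hle.trans hH
  have hr := ENNReal.toReal_mono (by
    refine ENNReal.mul_ne_top (ENNReal.mul_ne_top ENNReal.coe_ne_top (Lp.eLpNorm_ne_top _)) ?_
    exact ENNReal.rpow_ne_top_of_nonneg hs.le (Lp.eLpNorm_ne_top _)) hfin
  rw [ENNReal.toReal_mul, ENNReal.toReal_mul, ← ENNReal.toReal_rpow, ← Lp.norm_def,
    ← Lp.norm_def, ← Lp.norm_def] at hr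
  refine hr.trans ?_
  have hpp : (0:ℝ) ≤ p := by linarith
  have : (ENNReal.ofNNReal ⟨p, hpp⟩).toReal = p := rfl
  rw [this]
  have hw0 := norm_nonneg w
  have := Real.rpow_le_rpow hw0 hwn hs.le
  gcongr

lemma ham_tendsto (p q : ℝ) (hp : 2 ≤ p) (hq : q = p / (p - 1))
    [Fact (1 ≤ ENNReal.ofReal p)] [Fact (1 ≤ ENNReal.ofReal q)]
    (u : ℕ → Lp ℝ (ENNReal.ofReal p) μ) (v : Lp ℝ (ENNReal.ofReal p) μ)
    (U : ℕ → Lp ℝ (ENNReal.ofReal q) μ) (V : Lp ℝ (ENNReal.ofReal q) μ)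
    (hU : ∀ k, U k =ᵐ[μ] fun x => |u k x| ^ (p - 2) * u k x)
    (hV : V =ᵐ[μ] fun x => |v x| ^ (p - 2) * v x)
    (h : Tendsto u atTop (𝓝 v)) : Tendsto U atTop (𝓝 V) := by
  rw [tendsto_iff_norm_sub_tendsto_zero] at h ⊢
  have h1 : Tendsto (fun k => p * ‖u k - v‖ * (‖u k‖ + ‖v‖) ^ (p - 2)) atTop
      (𝓝 (p * 0 * (‖v‖ + ‖v‖) ^ (p - 2))) := by
    refine (h.const_mul p).mul (Tendsto.rpow_const ?_ (Or.inr (by linarith)))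
    exact ((tendsto_iff_norm_sub_tendsto_zero.2 h).norm).add_const _
  rw [mul_zero, zero_mul] at h1
  exact squeeze_zero (fun _ => norm_nonneg _)
    (fun k => ham_norm_le p q hp hq _ _ _ _ (hU k) hV) h1

lemma ham_int_mono (p q : ℝ) (hp : 2 ≤ p) (hpq : p.HolderConjugate q)
    (u v : Lp ℝ (ENNReal.ofReal p) μ) (U V : Lp ℝ (ENNReal.ofReal q) μ)
    (hU : U =ᵐ[μ] fun x => |u x| ^ (p - 2) * u x)
    (hV : V =ᵐ[μ] fun x => |v x| ^ (p - 2) * v x) :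
    (2 * 2 ^ (p - 2))⁻¹ * ‖u - v‖ ^ p ≤
      ∫ x, (u - v : Lp ℝ (ENNReal.ofReal p) μ) x * (U - V : Lp ℝ (ENNReal.ofReal q) μ) x ∂μ := by
  haveI := hpq.ennrealOfReal
  have hp0 : ENNReal.ofReal p ≠ 0 := by simp; linarith
  have hn : ‖u - v‖ ^ p = ∫ x, ‖(u - v : Lp ℝ (ENNReal.ofReal p) μ) x‖ ^ p ∂μ := by
    have := (Lp.memLp (u - v)).eLpNorm_eq_integral_rpow_norm hp0 ENNReal.ofReal_ne_top
    rw [ENNReal.toReal_ofReal (by linarith)] at this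
    have hi : 0 ≤ ∫ x, ‖(u - v : Lp ℝ (ENNReal.ofReal p) μ) x‖ ^ p ∂μ :=
      integral_nonneg fun x => by positivity
    rw [Lp.norm_def, this, ENNReal.toReal_ofReal (by positivity), ← Real.rpow_mul hi,
      inv_mul_cancel₀ (by linarith), Real.rpow_one]
  rw [hn, ← integral_const_mul]
  apply integral_mono_ae
  · apply Integrable.const_mul
    have := (Lp.memLp (u - v)).integrable_norm_rpow hp0 ENNReal.ofReal_ne_top
    rwa [ENNReal.toReal_ofReal (by linarith)] at this
  · exact (Lp.memLp (u - v)).integrable_mul (Lp.memLp (U - V))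
  · filter_upwards [hU, hV, Lp.coeFn_sub U V, Lp.coeFn_sub u v] with x h1 h2 h3 h4
    have := ham_mono (p - 2) (by linarith) (u x) (v x)
    rw [sub_add_cancel] at this
    rw [h3, h4, Pi.sub_apply, Pi.sub_apply, h1, h2]
    exact this

end

/-- If `y_k → y₀` strongly in `L^p`, `z_k → z₀` weakly in `L^p`, and each pair
solves the Hammerstein equation `z_k + B(|y_k|^{p-2}y_k + |z_k|^{p-2}z_k) = g` with a positive
continuous linear operator `B : L^q → L^p`, then the limit pair solves the limit equation. -/
theorem hammerstein_limit_equation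
    {N : ℕ} (hN : 1 ≤ N)
    (Ω : Set (EuclideanSpace ℝ (Fin N))) (hΩo : IsOpen Ω)
    (hΩb : Bornology.IsBounded Ω)
    (p q : ℝ) (hp : 2 ≤ p) (hq : q = p / (p - 1))
    [Fact (1 ≤ ENNReal.ofReal p)] [Fact (1 ≤ ENNReal.ofReal q)]
    (μ : Measure (EuclideanSpace ℝ (Fin N))) (hμ : μ = volume.restrict Ω)
    (B : Lp ℝ (ENNReal.ofReal q) μ →L[ℝ] Lp ℝ (ENNReal.ofReal p) μ)
    (hBpos : ∀ w : Lp ℝ (ENNReal.ofReal q) μ, 0 ≤ ∫ x, (B w) x * w x ∂μ)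
    (g : Lp ℝ (ENNReal.ofReal p) μ)
    (y z : ℕ → Lp ℝ (ENNReal.ofReal p) μ)
    (y₀ z₀ : Lp ℝ (ENNReal.ofReal p) μ)
    -- strong convergence y_k → y₀ in L^p
    (hy : Tendsto (fun k => ‖y k - y₀‖) atTop (𝓝 0))
    -- weak convergence z_k → z₀ in L^p
    (hz : ∀ w : Lp ℝ (ENNReal.ofReal q) μ,
      Tendsto (fun k => ∫ x, (z k) x * w x ∂μ) atTop (𝓝 (∫ x, z₀ x * w x ∂μ)))
    -- the Hammerstein equation holds for every k, where F k is the L^q element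
    -- representing the nonlinearity |y_k|^{p-2}y_k + |z_k|^{p-2}z_k
    (F : ℕ → Lp ℝ (ENNReal.ofReal q) μ)
    (hF : ∀ k, (F k : EuclideanSpace ℝ (Fin N) → ℝ) =ᵐ[μ]
      fun x => |(y k) x| ^ (p - 2) * (y k) x + |(z k) x| ^ (p - 2) * (z k) x)
    (heq : ∀ k, z k + B (F k) = g) :
    ∃ F₀ : Lp ℝ (ENNReal.ofReal q) μ,
      (F₀ : EuclideanSpace ℝ (Fin N) → ℝ) =ᵐ[μ]
        (fun x => |y₀ x| ^ (p - 2) * y₀ x + |z₀ x| ^ (p - 2) * z₀ x) ∧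
      z₀ + B F₀ = g := by
  have hpq : p.HolderConjugate q :=
    (Real.holderConjugate_iff_eq_conjExponent (by linarith)).2 hq
  haveI hc := hpq.ennrealOfReal
  let L := (ContinuousLinearMap.mul ℝ ℝ).lpPairing μ (ENNReal.ofReal p) (ENNReal.ofReal q)
  have hL : ∀ u w, L u w = ∫ x, u x * w x ∂μ := fun u w =>
    ContinuousLinearMap.lpPairing_eq_integral _ u w
  let J : Lp ℝ (ENNReal.ofReal p) μ → Lp ℝ (ENNReal.ofReal q) μ :=
    fun u => (ham_memLp p q hp hq u).toLp
  have hJ : ∀ u, J u =ᵐ[μ] fun x => |u x| ^ (p - 2) * u x := fun u => MemLp.coeFn_toLp _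
  have hFJ : ∀ k, F k = J (y k) + J (z k) := fun k => by
    apply Lp.ext
    filter_upwards [hF k, hJ (y k), hJ (z k), Lp.coeFn_add (J (y k)) (J (z k))] with x h1 h2 h3 h4
    rw [h1, h4, Pi.add_apply, h2, h3]
  have hmono : ∀ u v, (2 * 2 ^ (p - 2))⁻¹ * ‖u - v‖ ^ p ≤ L (u - v) (J u - J v) := fun u v => by
    rw [hL]; exact ham_int_mono p q hp hpq u v _ _ (hJ u) (hJ v)
  have hy' : Tendsto y atTop (𝓝 y₀) := tendsto_iff_norm_sub_tendsto_zero.2 hy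
  have hJy : Tendsto (fun k => J (y k)) atTop (𝓝 (J y₀)) :=
    ham_tendsto p q hp hq y y₀ _ _ (fun k => hJ _) (hJ _) hy'
  set c : ℝ := (2 * 2 ^ (p - 2))⁻¹ with hcdef
  have hc0 : 0 < c := by positivity
  -- key estimate
  have hkey : ∀ k l, c * ‖z k - z l‖ ^ (p - 1) ≤ ‖L‖ * ‖J (y k) - J (y l)‖ := by
    intro k l
    have h1 : z k - z l = - B (F k - F l) := by
      rw [map_sub, eq_sub_of_add_eq (heq k), eq_sub_of_add_eq (heq l)]; abel
    have h2 : L (z k - z l) (F k - F l) ≤ 0 := by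
      rw [h1, map_neg, neg_apply, hL]
      linarith [hBpos (F k - F l)]
    have h3 : F k - F l = (J (y k) - J (y l)) + (J (z k) - J (z l)) := by
      rw [hFJ, hFJ]; abel
    rw [h3, map_add] at h2
    have h4 := hmono (z k) (z l)
    have h5 := L.le_opNorm₂ (z k - z l) (J (y k) - J (y l))
    have h6 := neg_abs_le (L (z k - z l) (J (y k) - J (y l)))
    rw [Real.norm_eq_abs] at h5
    rcases eq_or_lt_of_le (norm_nonneg (z k - z l)) with h0 | h0
    · rw [← h0, Real.zero_rpow (by linarith), mul_zero]; positivity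
    have h7 : ‖z k - z l‖ ^ p = ‖z k - z l‖ ^ (p - 1) * ‖z k - z l‖ := by
      rw [← Real.rpow_add_one h0.ne', sub_add_cancel]
    rw [h7] at h4
    refine le_of_mul_le_mul_right ?_ h0
    nlinarith
  have hcau : CauchySeq z := by
    rw [Metric.cauchySeq_iff]
    intro ε hε
    have hδ : 0 < c * ε ^ (p - 1) / (‖L‖ + 1) := by positivity
    obtain ⟨n, hn⟩ := Metric.cauchySeq_iff.1 hJy.cauchySeq _ hδ
    refine ⟨n, fun k hk l hl => ?_⟩
    have h1 := hn k hk l hl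
    rw [dist_eq_norm] at h1 ⊢
    by_contra! hcon
    have h2 : ε ^ (p - 1) ≤ ‖z k - z l‖ ^ (p - 1) :=
      Real.rpow_le_rpow hε.le hcon (by linarith)
    rw [lt_div_iff₀ (by positivity)] at h1
    have h3 := hkey k l
    have h4 : c * ε ^ (p - 1) ≤ c * ‖z k - z l‖ ^ (p - 1) := by gcongr
    nlinarith [norm_nonneg (J (y k) - J (y l))]
  obtain ⟨z', hz'⟩ := cauchySeq_tendsto_of_complete hcau
  have hzz : z' = z₀ := by
    have hw : ∀ w, L z' w = L z₀ w := fun w => by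
      have h1 : Tendsto (fun k => L (z k) w) atTop (𝓝 (L z' w)) :=
        ((L.flip w).continuous.tendsto z').comp hz'
      have h2 : Tendsto (fun k => L (z k) w) atTop (𝓝 (L z₀ w)) := by
        simp only [hL]; exact hz w
      exact tendsto_nhds_unique h1 h2
    have h := hmono z' z₀
    have h0 : L (z' - z₀) = 0 := by
      ext w
      rw [map_sub, sub_apply, hw, sub_self]; rfl
    rw [h0, zero_apply] at h
    by_contra hne
    have : 0 < ‖z' - z₀‖ := norm_pos_iff.2 (sub_ne_zero.2 hne)
    have : 0 < c * ‖z' - z₀‖ ^ p := by positivity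
    linarith
  rw [hzz] at hz'
  have hJz : Tendsto (fun k => J (z k)) atTop (𝓝 (J z₀)) :=
    ham_tendsto p q hp hq z z₀ _ _ (fun k => hJ _) (hJ _) hz'
  refine ⟨J y₀ + J z₀, ?_, ?_⟩
  · filter_upwards [hJ y₀, hJ z₀, Lp.coeFn_add (J y₀) (J z₀)] with x h2 h3 h4
    rw [h4, Pi.add_apply, h2, h3]
  · have h1 : Tendsto (fun k => z k + B (F k)) atTop (𝓝 (z₀ + B (J y₀ + J z₀))) := by
      refine hz'.add ((B.continuous.tendsto _).comp ?_)
      rw [show F = fun k => J (y k) + J (z k) from funext hFJ]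
      exact hJy.add hJz
    simp only [heq] at h1
    exact tendsto_nhds_unique h1 tendsto_const_nhds |>.symm ▸ rfl
end

section
/- Let Ω ⊆ ℝ^N be a bounded open set, p ≥ 2 a real number and q = p/(p−1). Let B : L^q(Ω) → L^p(Ω) be a positive continuous linear operator and g ∈ L^p(Ω). Suppose (y_k) and (z_k) are sequences in L^p(Ω) such that y_k → y₀ strongly in L^p(Ω), z_k → z₀ weakly in L^p(Ω), and for every k the Hammerstein equation z_k + B(|y_k|^{p−2}y_k + |z_k|^{p−2}z_k) = g holds in L^p(Ω). Then z_k → z₀ strongly in L^p(Ω), and z₀ satisfies the limit equation z₀ + B(|y₀|^{p−2}y₀ + |z₀|^{p−2}z₀) = g. -/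
open MeasureTheory Filter Topology

noncomputable def hphi (p x : ℝ) : ℝ := |x| ^ (p - 2) * x

lemma hphi_nonneg {p x : ℝ} (hp : 2 ≤ p) (hx : 0 ≤ x) : hphi p x = x ^ (p - 1) := by
  unfold hphi
  rw [abs_of_nonneg hx]
  rcases hx.eq_or_lt with rfl | h
  · rw [Real.zero_rpow (by linarith : p - 1 ≠ 0), mul_zero]
  · rw [show p - 1 = (p - 2) + 1 by ring, Real.rpow_add h, Real.rpow_one]

lemma hphi_neg (p x : ℝ) : hphi p (-x) = - hphi p x := by
  unfold hphi; rw [abs_neg]; ring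

lemma hphi_abs {p : ℝ} (hp : 2 ≤ p) (x : ℝ) : |hphi p x| = |x| ^ (p - 1) := by
  rw [← hphi_nonneg hp (abs_nonneg x)]
  unfold hphi
  rw [abs_mul, abs_abs, abs_of_nonneg (by positivity : 0 ≤ |x| ^ (p - 2))]

lemma hphi_mul_self {p : ℝ} (hp : 2 ≤ p) (x : ℝ) : x * hphi p x = |x| ^ p := by
  have : x * hphi p x = |x| * hphi p |x| := by
    unfold hphi; rw [abs_abs, mul_left_comm, mul_left_comm |x|, abs_mul_abs_self]
  rw [this, hphi_nonneg hp (abs_nonneg x)]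
  rcases (abs_nonneg x).eq_or_lt with h | h
  · rw [← h, Real.zero_rpow (by linarith : p ≠ 0), zero_mul]
  · rw [Real.rpow_sub_one h.ne']
    field_simp

lemma hphi_lip_aux {p a b : ℝ} (hp : 2 ≤ p) (hb : 0 ≤ b) (hab : b ≤ a) :
    |a ^ (p-1) - b ^ (p-1)| ≤ (p - 1) * (a ^ (p - 2) * (a - b)) := by
  rcases (hb.trans hab).eq_or_lt with h | h
  · have : b = 0 := by linarith
    subst this; subst h; simp
  have h1 := one_add_mul_self_le_rpow_one_add (s := b / a - 1) (p := p - 1)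
    (by have : 0 ≤ b / a := by positivity
        linarith) (by linarith)
  rw [show 1 + (b / a - 1) = b / a by ring, Real.div_rpow hb h.le] at h1
  have h3 : 0 < a ^ (p - 1) := by positivity
  have h4 : a ^ (p - 1) = a ^ (p - 2) * a := by
    rw [show p - 1 = (p - 2) + 1 by ring, Real.rpow_add h, Real.rpow_one]
  rw [le_div_iff₀ h3] at h1
  have h5 : b ^ (p - 1) ≤ a ^ (p - 1) := Real.rpow_le_rpow hb hab (by linarith)
  rw [abs_of_nonneg (by linarith)]
  have h6 : (1 + (p - 1) * (b / a - 1)) * a ^ (p - 1)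
      = a ^ (p - 1) - (p - 1) * (a ^ (p - 2) * (a - b)) := by
    rw [h4]; field_simp; ring
  linarith

lemma hphi_sign {P : ℝ → ℝ → Prop} (hs : ∀ a b, P a b → P b a) (hn : ∀ a b, P a b → P (-a) (-b))
    (h1 : ∀ a b, 0 ≤ b → b ≤ a → P a b) (h2 : ∀ a b, 0 ≤ a → 0 ≤ b → P a (-b)) (a b : ℝ) :
    P a b := by
  have h3 : ∀ a b, 0 ≤ a → 0 ≤ b → P a b := fun a b ha hb => by
    rcases le_total a b with h | h
    · exact hs _ _ (h1 _ _ ha h)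
    · exact h1 _ _ hb h
  rcases le_total 0 a with ha | ha <;> rcases le_total 0 b with hb | hb
  · exact h3 _ _ ha hb
  · simpa using h2 a (-b) ha (by linarith)
  · simpa using hs _ _ (h2 b (-a) hb (by linarith))
  · simpa using hn _ _ (h3 (-a) (-b) (by linarith) (by linarith))

lemma hphi_lip {p : ℝ} (hp : 2 ≤ p) (a b : ℝ) :
    |hphi p a - hphi p b| ≤ (p - 1) * ((|a| + |b|) ^ (p - 2) * |a - b|) := by
  refine hphi_sign (P := fun a b => |hphi p a - hphi p b| ≤ (p - 1) * ((|a| + |b|) ^ (p - 2) * |a - b|))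
    ?_ ?_ ?_ ?_ a b
  · intro a b h
    rwa [abs_sub_comm, add_comm |b|, abs_sub_comm b]
  · intro a b h
    rw [hphi_neg, hphi_neg, abs_neg, abs_neg, ← neg_sub', ← neg_sub', abs_neg, abs_neg]
    exact h
  · intro a b hb hab
    have ha := hb.trans hab
    rw [hphi_nonneg hp hb, hphi_nonneg hp ha, abs_of_nonneg ha, abs_of_nonneg hb,
      abs_of_nonneg (sub_nonneg.2 hab)]
    refine (hphi_lip_aux hp hb hab).trans ?_
    have : a ^ (p - 2) ≤ (a + b) ^ (p - 2) := Real.rpow_le_rpow ha (by linarith) (by linarith)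
    have h1 : 0 ≤ a - b := by linarith
    have h2 : 0 ≤ p - 1 := by linarith
    gcongr
  · intro a b ha hb
    rw [hphi_neg, hphi_nonneg hp hb, hphi_nonneg hp ha, abs_neg, abs_of_nonneg ha,
      abs_of_nonneg hb, sub_neg_eq_add, sub_neg_eq_add, abs_of_nonneg (by positivity),
      abs_of_nonneg (by positivity)]
    have h1 : a ^ (p - 1) + b ^ (p - 1) ≤ (a + b) ^ (p - 1) :=
      Real.add_rpow_le_rpow_add ha hb (by linarith)
    have h2 := hphi_nonneg hp (add_nonneg ha hb)
    unfold hphi at h2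
    rw [abs_of_nonneg (add_nonneg ha hb)] at h2
    rw [h2]
    have : 0 ≤ (a + b) ^ (p - 1) := by positivity
    nlinarith

lemma hphi_mono {p : ℝ} (hp : 2 ≤ p) (a b : ℝ) :
    |a - b| ^ p ≤ 2 ^ p * ((a - b) * (hphi p a - hphi p b)) := by
  refine hphi_sign (P := fun a b => |a - b| ^ p ≤ 2 ^ p * ((a - b) * (hphi p a - hphi p b)))
    ?_ ?_ ?_ ?_ a b
  · intro a b h
    rw [abs_sub_comm]; convert h using 2; ring
  · intro a b h
    rw [hphi_neg, hphi_neg, ← neg_sub', ← neg_sub', abs_neg, neg_mul_neg]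
    exact h
  · intro a b hb hab
    have ha := hb.trans hab
    rw [← hphi_mul_self hp, hphi_nonneg hp hb, hphi_nonneg hp ha,
      hphi_nonneg hp (sub_nonneg.2 hab)]
    have h1 : (a - b) ^ (p - 1) + b ^ (p - 1) ≤ (a - b + b) ^ (p - 1) :=
      Real.add_rpow_le_rpow_add (sub_nonneg.2 hab) hb (by linarith)
    rw [sub_add_cancel] at h1
    have h2 : (1:ℝ) ≤ 2 ^ p := Real.one_le_rpow (by norm_num) (by linarith)
    have h0 : 0 ≤ a - b := by linarith
    have h3 : (a - b) * (a - b) ^ (p - 1) ≤ (a - b) * (a ^ (p - 1) - b ^ (p - 1)) := by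
      gcongr; linarith
    have h4 : 0 ≤ (a - b) * (a - b) ^ (p - 1) := by positivity
    nlinarith
  · intro a b ha hb
    rw [← hphi_mul_self hp, hphi_neg, hphi_nonneg hp hb, hphi_nonneg hp ha, sub_neg_eq_add,
      sub_neg_eq_add, hphi_nonneg hp (add_nonneg ha hb)]
    have key : (a + b) ^ (p - 1) ≤ 2 ^ p * (a ^ (p - 1) + b ^ (p - 1)) := by
      have h1 : (2:ℝ) ^ (p - 1) ≤ 2 ^ p := Real.rpow_le_rpow_of_exponent_le (by norm_num) (by linarith)
      have h2 : (a + b) ^ (p - 1) ≤ (2 * max a b) ^ (p - 1) :=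
        Real.rpow_le_rpow (by positivity) (by linarith [le_max_left a b, le_max_right a b])
          (by linarith)
      rw [Real.mul_rpow (by norm_num) (by positivity)] at h2
      have h3 : (max a b) ^ (p - 1) ≤ a ^ (p - 1) + b ^ (p - 1) := by
        have := Real.rpow_nonneg ha (p - 1)
        have := Real.rpow_nonneg hb (p - 1)
        rcases max_choice a b with h | h <;> rw [h] <;> linarith
      refine h2.trans ?_
      gcongr
    calc (a + b) * (a + b) ^ (p - 1) ≤ (a + b) * (2 ^ p * (a ^ (p - 1) + b ^ (p - 1))) := by gcongr
      _ = _ := by ring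

lemma hphi_meas (p : ℝ) : Measurable (hphi p) := by
  unfold hphi; fun_prop

section
variable {α : Type*} [MeasurableSpace α] {μ : Measure α} {p q : ℝ}

lemma hphi_memLp (hp : 2 ≤ p) (hq : q = p / (p - 1)) {f : α → ℝ}
    (hf : MemLp f (ENNReal.ofReal p) μ) :
    MemLp (fun x => hphi p (f x)) (ENNReal.ofReal q) μ := by
  have h := hf.norm_rpow_div (ENNReal.ofReal (p - 1))
  rw [ENNReal.toReal_ofReal (by linarith), ← ENNReal.ofReal_div_of_pos (by linarith), ← hq] at h
  refine h.congr_norm ((hphi_meas p).comp_aemeasurable hf.1.aemeasurable).aestronglyMeasurable ?_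
  refine Eventually.of_forall fun x => ?_
  simp only [Real.norm_eq_abs]
  rw [hphi_abs hp, abs_of_nonneg (by positivity)]

lemma hphi_eLpNorm (hp : 2 ≤ p) (hq : q = p / (p - 1)) {f g : α → ℝ}
    (hf : MemLp f (ENNReal.ofReal p) μ) (hg : MemLp g (ENNReal.ofReal p) μ) :
    eLpNorm (fun x => hphi p (f x) - hphi p (g x)) (ENNReal.ofReal q) μ ≤
      ENNReal.ofReal (p - 1) * ((eLpNorm f (ENNReal.ofReal p) μ + eLpNorm g (ENNReal.ofReal p) μ) ^ (p - 2)
        * eLpNorm (f - g) (ENNReal.ofReal p) μ) := by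
  rcases hp.eq_or_lt with rfl | hp2
  · have : q = 2 := by rw [hq]; norm_num
    subst this
    simp only [hphi, sub_self, Real.rpow_zero, one_mul, ENNReal.rpow_zero]
    norm_num
    exact le_rfl
  have hp1 : (1 : ENNReal) ≤ ENNReal.ofReal p := by
    rw [ENNReal.one_le_ofReal]; linarith
  have hT : ENNReal.HolderTriple (ENNReal.ofReal (p / (p - 2))) (ENNReal.ofReal p) (ENNReal.ofReal q) := by
    constructor
    have h2 : 0 < p - 2 := by linarith
    have h1 : 0 < p - 1 := by linarith
    have h0 : 0 < p := by linarith
    subst hq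
    rw [← ENNReal.ofReal_inv_of_pos (by positivity), ← ENNReal.ofReal_inv_of_pos (by positivity),
      ← ENNReal.ofReal_inv_of_pos (by positivity), ← ENNReal.ofReal_add (by positivity) (by positivity)]
    congr 1
    field_simp
    ring
  set h : α → ℝ := fun x => |f x| + |g x| with hh
  have hhm : AEStronglyMeasurable h μ := hf.1.norm.add hg.1.norm
  have e1 : eLpNorm (fun x => ‖h x‖ ^ (p - 2)) (ENNReal.ofReal (p / (p - 2))) μ
      = eLpNorm h (ENNReal.ofReal p) μ ^ (p - 2) := by
    rw [eLpNorm_norm_rpow _ (by linarith), ← ENNReal.ofReal_mul (by apply div_nonneg <;> linarith),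
      div_mul_cancel₀ _ (by linarith)]
  have e2 : eLpNorm h (ENNReal.ofReal p) μ ≤
      eLpNorm f (ENNReal.ofReal p) μ + eLpNorm g (ENNReal.ofReal p) μ := by
    have := eLpNorm_add_le hf.1.norm hg.1.norm hp1
    rwa [eLpNorm_norm, eLpNorm_norm] at this
  have e3 := eLpNorm_smul_le_mul_eLpNorm (μ := μ) (hf.1.sub hg.1)
    (φ := fun x => ‖h x‖ ^ (p - 2)) (hhm.norm.aemeasurable.pow_const _).aestronglyMeasurable
    (hpqr := hT)
  rw [e1] at e3
  have e4 : eLpNorm (fun x => hphi p (f x) - hphi p (g x)) (ENNReal.ofReal q) μ ≤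
      ENNReal.ofReal (p - 1) * eLpNorm ((fun x => ‖h x‖ ^ (p - 2)) • (f - g)) (ENNReal.ofReal q) μ := by
    apply eLpNorm_le_mul_eLpNorm_of_ae_le_mul
    refine Eventually.of_forall fun x => ?_
    have := hphi_lip hp (f x) (g x)
    simp only [Pi.smul_apply', Pi.sub_apply, smul_eq_mul, Real.norm_eq_abs, hh]
    rw [abs_mul, abs_of_nonneg (by positivity : 0 ≤ |(|f x| + |g x|)| ^ (p - 2)),
      abs_of_nonneg (by positivity : 0 ≤ |f x| + |g x|)]
    exact this
  refine e4.trans ?_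
  gcongr
  refine e3.trans ?_
  gcongr

lemma hphi_exists (hp : 2 ≤ p) (hq : q = p / (p - 1)) 
    [Fact (1 ≤ ENNReal.ofReal p)] [Fact (1 ≤ ENNReal.ofReal q)] :
    ∃ Φ : Lp ℝ (ENNReal.ofReal p) μ → Lp ℝ (ENNReal.ofReal q) μ,
      (∀ u, (Φ u : α → ℝ) =ᵐ[μ] fun x => hphi p (u x)) ∧ Continuous Φ := by
  refine ⟨fun u => (hphi_memLp hp hq (Lp.memLp u)).toLp _, fun u => MemLp.coeFn_toLp _, ?_⟩
  rw [continuous_iff_continuousAt]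
  intro u
  rw [ContinuousAt, tendsto_iff_norm_sub_tendsto_zero]
  have hb : ∀ v : Lp ℝ (ENNReal.ofReal p) μ,
      ‖(hphi_memLp hp hq (Lp.memLp v)).toLp _ - (hphi_memLp hp hq (Lp.memLp u)).toLp _‖ ≤
      (p - 1) * ((‖v‖ + ‖u‖) ^ (p - 2) * ‖v - u‖) := by
    intro v
    have h := hphi_eLpNorm hp hq (Lp.memLp v) (Lp.memLp u)
    rw [← MemLp.toLp_sub, Lp.norm_toLp]
    have h' := ENNReal.toReal_mono ?_ h
    · refine h'.trans (le_of_eq ?_)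
      rw [ENNReal.toReal_mul, ENNReal.toReal_mul, ← ENNReal.toReal_rpow,
        ENNReal.toReal_add (Lp.eLpNorm_ne_top v) (Lp.eLpNorm_ne_top u),
        ENNReal.toReal_ofReal (by linarith), Lp.norm_def, Lp.norm_def, Lp.norm_def,
        eLpNorm_congr_ae (Lp.coeFn_sub v u)]
    · have h1 := Lp.eLpNorm_ne_top v
      have h2 := Lp.eLpNorm_ne_top u
      have h3 : eLpNorm (⇑v - ⇑u) (ENNReal.ofReal p) μ ≠ ⊤ := ((Lp.memLp v).sub (Lp.memLp u)).2.ne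
      refine ENNReal.mul_ne_top ENNReal.ofReal_ne_top (ENNReal.mul_ne_top ?_ h3)
      exact ENNReal.rpow_ne_top_of_nonneg (by linarith) (ENNReal.add_ne_top.2 ⟨h1, h2⟩)
  refine squeeze_zero (fun _ => norm_nonneg _) hb ?_
  have hc : Continuous fun v : Lp ℝ (ENNReal.ofReal p) μ =>
      (p - 1) * ((‖v‖ + ‖u‖) ^ (p - 2) * ‖v - u‖) := by
    refine continuous_const.mul (Continuous.mul ?_ (by fun_prop))
    exact Continuous.rpow_const (by fun_prop) (fun _ => Or.inr (by linarith))
  have := hc.tendsto u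
  simpa using this

lemma hphi_norm_rpow (hp : 2 ≤ p) (u : Lp ℝ (ENNReal.ofReal p) μ) :
    ‖u‖ ^ p = ∫ x, |u x| ^ p ∂μ := by
  have h0 : ENNReal.ofReal p ≠ 0 := by simp; linarith
  rw [Lp.norm_def, (Lp.memLp u).eLpNorm_eq_integral_rpow_norm h0 ENNReal.ofReal_ne_top]
  have hn : 0 ≤ ∫ x, |u x| ^ p ∂μ := integral_nonneg fun x => by positivity
  simp only [Real.norm_eq_abs, ENNReal.toReal_ofReal (by linarith : 0 ≤ p)]
  rw [ENNReal.toReal_ofReal (by positivity), Real.rpow_inv_rpow hn (by linarith)]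

theorem hphi_main (hp : 2 ≤ p) (hq : q = p / (p - 1))
    [Fact (1 ≤ ENNReal.ofReal p)] [Fact (1 ≤ ENNReal.ofReal q)]
    (B : Lp ℝ (ENNReal.ofReal q) μ →L[ℝ] Lp ℝ (ENNReal.ofReal p) μ)
    (hBpos : ∀ w : Lp ℝ (ENNReal.ofReal q) μ, 0 ≤ ∫ x, (B w) x * w x ∂μ)
    (g : Lp ℝ (ENNReal.ofReal p) μ)
    (y z : ℕ → Lp ℝ (ENNReal.ofReal p) μ)
    (y₀ z₀ : Lp ℝ (ENNReal.ofReal p) μ)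
    (hy : Tendsto (fun k => ‖y k - y₀‖) atTop (𝓝 0))
    (hz : ∀ w : Lp ℝ (ENNReal.ofReal q) μ,
      Tendsto (fun k => ∫ x, (z k) x * w x ∂μ) atTop (𝓝 (∫ x, z₀ x * w x ∂μ)))
    (F : ℕ → Lp ℝ (ENNReal.ofReal q) μ)
    (hF : ∀ k, (F k : α → ℝ) =ᵐ[μ]
      fun x => |(y k) x| ^ (p - 2) * (y k) x + |(z k) x| ^ (p - 2) * (z k) x)
    (heq : ∀ k, z k + B (F k) = g) :
    Tendsto (fun k => ‖z k - z₀‖) atTop (𝓝 0) ∧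
    ∃ F₀ : Lp ℝ (ENNReal.ofReal q) μ,
      (F₀ : α → ℝ) =ᵐ[μ]
        (fun x => |y₀ x| ^ (p - 2) * y₀ x + |z₀ x| ^ (p - 2) * z₀ x) ∧
      z₀ + B F₀ = g := by
  obtain ⟨Φ, hΦ, hΦc⟩ := hphi_exists (μ := μ) hp hq
  have hH : ENNReal.HolderConjugate (ENNReal.ofReal p) (ENNReal.ofReal q) := by
    constructor
    have h1 : 0 < p - 1 := by linarith
    have h0 : 0 < p := by linarith
    subst hq
    rw [← ENNReal.ofReal_inv_of_pos (by positivity), ← ENNReal.ofReal_inv_of_pos (by positivity),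
      ← ENNReal.ofReal_add (by positivity) (by positivity)]
    rw [inv_one, ← ENNReal.ofReal_one]
    congr 1
    field_simp
    ring
  set T := (ContinuousLinearMap.mul ℝ ℝ).lpPairing μ (ENNReal.ofReal p) (ENNReal.ofReal q) with hT
  have hTi : ∀ f w, T f w = ∫ x, f x * w x ∂μ := fun f w =>
    ContinuousLinearMap.lpPairing_eq_integral _ f w
  have hFe : ∀ k, F k = Φ (y k) + Φ (z k) := by
    intro k
    apply Lp.ext
    filter_upwards [hF k, Lp.coeFn_add (Φ (y k)) (Φ (z k)), hΦ (y k), hΦ (z k)] with x h1 h2 h3 h4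
    rw [h1, h2, Pi.add_apply, h3, h4]; rfl
  simp only [← hTi] at hBpos hz
  have hint : ∀ (f : Lp ℝ (ENNReal.ofReal p) μ) (w : Lp ℝ (ENNReal.ofReal q) μ),
      Integrable (fun x => f x * w x) μ := fun f w =>
    MemLp.integrable_mul (Lp.memLp f) (Lp.memLp w)
  have hmono : ∀ a b : Lp ℝ (ENNReal.ofReal p) μ,
      ‖a - b‖ ^ p ≤ 2 ^ p * T (a - b) (Φ a - Φ b) := by
    intro a b
    rw [hphi_norm_rpow hp, hTi, ← integral_const_mul]
    apply integral_mono_of_nonneg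
    · exact Eventually.of_forall fun x => by positivity
    · exact (hint _ _).const_mul _
    · filter_upwards [Lp.coeFn_sub a b, Lp.coeFn_sub (Φ a) (Φ b), hΦ a, hΦ b] with x h1 h2 h3 h4
      rw [h1, h2, Pi.sub_apply, Pi.sub_apply, h3, h4]
      exact hphi_mono hp _ _
  have hΦ0 : Φ 0 = 0 := by
    apply Lp.ext
    filter_upwards [hΦ 0, Lp.coeFn_zero ℝ (ENNReal.ofReal p) μ,
      Lp.coeFn_zero ℝ (ENNReal.ofReal q) μ] with x h1 h2 h3
    rw [h1, h2, h3]; simp [hphi]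
  have hyT : Tendsto y atTop (𝓝 y₀) := tendsto_iff_norm_sub_tendsto_zero.2 hy
  have hΦy : Tendsto (fun k => Φ (y k)) atTop (𝓝 (Φ y₀)) := (hΦc.tendsto y₀).comp hyT
  have hest : ∀ k m, ‖z k - z m‖ ^ (p - 1) ≤ 2 ^ p * ‖T‖ * ‖Φ (y k) - Φ (y m)‖ := by
    intro k m
    have h1 := hBpos (F k - F m)
    have h2 : B (F k - F m) = - (z k - z m) := by
      rw [map_sub, ← sub_eq_iff_eq_add'.2 (heq k).symm, ← sub_eq_iff_eq_add'.2 (heq m).symm]; abel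
    rw [h2, show F k - F m = (Φ (y k) - Φ (y m)) + (Φ (z k) - Φ (z m)) by rw [hFe, hFe]; abel,
      map_neg, ContinuousLinearMap.neg_apply, map_add] at h1
    have h3 := hmono (z k) (z m)
    have h4 := T.le_opNorm₂ (z k - z m) (Φ (y k) - Φ (y m))
    rw [Real.norm_eq_abs] at h4
    have h5 := (neg_le_abs _).trans h4
    have h6 : ‖z k - z m‖ ^ p ≤ 2 ^ p * (‖T‖ * ‖z k - z m‖ * ‖Φ (y k) - Φ (y m)‖) := by
      refine h3.trans ?_
      gcongr
      linarith
    rcases (norm_nonneg (z k - z m)).eq_or_lt with h | h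
    · rw [← h, Real.zero_rpow (by linarith)]; positivity
    · have h7 : ‖z k - z m‖ ^ (p - 1) * ‖z k - z m‖ = ‖z k - z m‖ ^ p := by
        rw [Real.rpow_sub_one h.ne', div_mul_cancel₀ _ h.ne']
      rw [← h7] at h6
      refine le_of_mul_le_mul_right (h6.trans (le_of_eq ?_)) h
      ring
  have hcau : CauchySeq z := by
    rw [Metric.cauchySeq_iff]
    intro ε hε
    have hc := Metric.cauchySeq_iff.1 hΦy.cauchySeq
    have hpos : 0 < 2 ^ p * ‖T‖ + 1 := by positivity
    obtain ⟨n, hn⟩ := hc (ε ^ (p - 1) / (2 ^ p * ‖T‖ + 1)) (by positivity)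
    refine ⟨n, fun k hk m hm => ?_⟩
    have h1 := hn k hk m hm
    rw [dist_eq_norm] at h1 ⊢
    rw [lt_div_iff₀ hpos] at h1
    by_contra hcon
    have h2 : ε ^ (p - 1) ≤ ‖z k - z m‖ ^ (p - 1) :=
      Real.rpow_le_rpow hε.le (not_lt.1 hcon) (by linarith)
    nlinarith [hest k m, norm_nonneg (Φ (y k) - Φ (y m))]
  obtain ⟨z', hz'⟩ := cauchySeq_tendsto_of_complete hcau
  have hzz : z' = z₀ := by
    have h1 : ∀ w, T z' w = T z₀ w := fun w =>
      tendsto_nhds_unique (((T.flip w).continuous.tendsto z').comp hz') (hz w)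
    have h2 := hmono (z' - z₀) 0
    rw [hΦ0, sub_zero, sub_zero, map_sub, ContinuousLinearMap.sub_apply, h1, sub_self, mul_zero] at h2
    by_contra hne
    have : 0 < ‖z' - z₀‖ := norm_pos_iff.2 (sub_ne_zero.2 hne)
    have : 0 < ‖z' - z₀‖ ^ p := by positivity
    linarith
  subst hzz
  refine ⟨tendsto_iff_norm_sub_tendsto_zero.1 hz', Φ y₀ + Φ z', ?_, ?_⟩
  · filter_upwards [Lp.coeFn_add (Φ y₀) (Φ z'), hΦ y₀, hΦ z'] with x h2 h3 h4
    rw [h2, Pi.add_apply, h3, h4]; rfl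
  · have hFt : Tendsto F atTop (𝓝 (Φ y₀ + Φ z')) := by
      rw [show F = fun k => Φ (y k) + Φ (z k) from funext hFe]
      exact hΦy.add ((hΦc.tendsto z').comp hz')
    have h := hz'.add ((B.continuous.tendsto _).comp hFt)
    refine tendsto_nhds_unique h ?_
    simp only [Function.comp_def, heq]
    exact tendsto_const_nhds
end

/-- Under the hypotheses of Statement 0, additionally the weakly convergent
sequence `z_k` in fact converges strongly in `L^p` to `z₀`, and `z₀` satisfies the limit
Hammerstein equation. -/
theorem hammerstein_strong_convergence
    {N : ℕ} (hN : 1 ≤ N)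
    (Ω : Set (EuclideanSpace ℝ (Fin N))) (hΩo : IsOpen Ω)
    (hΩb : Bornology.IsBounded Ω)
    (p q : ℝ) (hp : 2 ≤ p) (hq : q = p / (p - 1))
    [Fact (1 ≤ ENNReal.ofReal p)] [Fact (1 ≤ ENNReal.ofReal q)]
    (μ : Measure (EuclideanSpace ℝ (Fin N))) (hμ : μ = volume.restrict Ω)
    (B : Lp ℝ (ENNReal.ofReal q) μ →L[ℝ] Lp ℝ (ENNReal.ofReal p) μ)
    (hBpos : ∀ w : Lp ℝ (ENNReal.ofReal q) μ, 0 ≤ ∫ x, (B w) x * w x ∂μ)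
    (g : Lp ℝ (ENNReal.ofReal p) μ)
    (y z : ℕ → Lp ℝ (ENNReal.ofReal p) μ)
    (y₀ z₀ : Lp ℝ (ENNReal.ofReal p) μ)
    -- strong convergence y_k → y₀ in L^p
    (hy : Tendsto (fun k => ‖y k - y₀‖) atTop (𝓝 0))
    -- weak convergence z_k → z₀ in L^p
    (hz : ∀ w : Lp ℝ (ENNReal.ofReal q) μ,
      Tendsto (fun k => ∫ x, (z k) x * w x ∂μ) atTop (𝓝 (∫ x, z₀ x * w x ∂μ)))
    -- the Hammerstein equation holds for every k, where F k is the L^q element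
    -- representing the nonlinearity |y_k|^{p-2}y_k + |z_k|^{p-2}z_k
    (F : ℕ → Lp ℝ (ENNReal.ofReal q) μ)
    (hF : ∀ k, (F k : EuclideanSpace ℝ (Fin N) → ℝ) =ᵐ[μ]
      fun x => |(y k) x| ^ (p - 2) * (y k) x + |(z k) x| ^ (p - 2) * (z k) x)
    (heq : ∀ k, z k + B (F k) = g) :
    Tendsto (fun k => ‖z k - z₀‖) atTop (𝓝 0) ∧
    ∃ F₀ : Lp ℝ (ENNReal.ofReal q) μ,
      (F₀ : EuclideanSpace ℝ (Fin N) → ℝ) =ᵐ[μ]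
        (fun x => |y₀ x| ^ (p - 2) * y₀ x + |z₀ x| ^ (p - 2) * z₀ x) ∧
      z₀ + B F₀ = g := by
  exact hphi_main hp hq B hBpos g y z y₀ z₀ hy hz F hF heq
end

section
/- Let Ω ⊆ ℝ^N be a bounded open set, p ≥ 2 a real number and q = p/(p−1). Let B : L^q(Ω) → L^p(Ω) be a strictly positive continuous linear operator, let g ∈ L^p(Ω) and h ∈ L^q(Ω) satisfy B h = g, and let y ∈ L^p(Ω). Assume there is λ > 0 such that ∫_Ω (|y|^{p−2}y + |z|^{p−2}z − h) z dx ≥ 0 for every z ∈ L^p(Ω) with ‖z‖_p > λ. Then the solution set H(y) = { z ∈ L^p(Ω) : z + B(|y|^{p−2}y + |z|^{p−2}z) = g } is sequentially compact in the norm topology of L^p(Ω): every sequence in H(y) has a subsequence converging strongly in L^p(Ω) to an element of H(y). -/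
open MeasureTheory Filter Topology

lemma mono_aux (r a b : ℝ) (hr : 0 ≤ r) :
    0 ≤ (a - b) * (|a| ^ r * a - |b| ^ r * b) := by
  have hs : 0 ≤ |a| ^ r := Real.rpow_nonneg (abs_nonneg a) r
  have ht : 0 ≤ |b| ^ r := Real.rpow_nonneg (abs_nonneg b) r
  have key : 0 ≤ (|a| ^ r - |b| ^ r) * (a ^ 2 - b ^ 2) := by
    rcases le_total |a| |b| with hab | hab
    · have h1 : |a| ^ r ≤ |b| ^ r := Real.rpow_le_rpow (abs_nonneg a) hab hr
      have h2 : a ^ 2 ≤ b ^ 2 := sq_le_sq.mpr hab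
      exact mul_nonneg_of_nonpos_of_nonpos (by linarith) (by linarith)
    · have h1 : |b| ^ r ≤ |a| ^ r := Real.rpow_le_rpow (abs_nonneg b) hab hr
      have h2 : b ^ 2 ≤ a ^ 2 := sq_le_sq.mpr hab
      exact mul_nonneg (by linarith) (by linarith)
  have h3 : 0 ≤ (|a| ^ r + |b| ^ r) * (a - b) ^ 2 := by positivity
  nlinarith

/-- Under strict positivity of `B` and the coercivity condition, the solution set
`H(y)` of the Hammerstein equation `z + B(|y|^{p-2}y + |z|^{p-2}z) = g` is sequentially compact
in the norm topology of `L^p(Ω)`. -/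
theorem hammerstein_solution_set_compact
    {N : ℕ} (hN : 1 ≤ N)
    (Ω : Set (EuclideanSpace ℝ (Fin N))) (hΩo : IsOpen Ω)
    (hΩb : Bornology.IsBounded Ω)
    (p q : ℝ) (hp : 2 ≤ p) (hq : q = p / (p - 1))
    [Fact (1 ≤ ENNReal.ofReal p)] [Fact (1 ≤ ENNReal.ofReal q)]
    (μ : Measure (EuclideanSpace ℝ (Fin N))) (hμ : μ = volume.restrict Ω)
    (B : Lp ℝ (ENNReal.ofReal q) μ →L[ℝ] Lp ℝ (ENNReal.ofReal p) μ)
    -- B is strictly positive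
    (hBpos : ∀ w : Lp ℝ (ENNReal.ofReal q) μ, 0 ≤ ∫ x, (B w) x * w x ∂μ)
    (hBstrict : ∀ w : Lp ℝ (ENNReal.ofReal q) μ, w ≠ 0 → 0 < ∫ x, (B w) x * w x ∂μ)
    (g : Lp ℝ (ENNReal.ofReal p) μ) (h : Lp ℝ (ENNReal.ofReal q) μ)
    (hBh : B h = g)
    (y : Lp ℝ (ENNReal.ofReal p) μ)
    (lam : ℝ) (hlam : 0 < lam)
    -- coercivity: ∫ (|y|^{p-2}y + |z|^{p-2}z − h) z dx ≥ 0 whenever ‖z‖_p > λ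
    (hcoerc : ∀ z : Lp ℝ (ENNReal.ofReal p) μ, lam < ‖z‖ →
      0 ≤ ∫ x, (|y x| ^ (p - 2) * y x + |z x| ^ (p - 2) * z x - h x) * z x ∂μ)
    -- the solution set H(y)
    (H : Set (Lp ℝ (ENNReal.ofReal p) μ))
    (hH : H = {z : Lp ℝ (ENNReal.ofReal p) μ |
      ∃ F : Lp ℝ (ENNReal.ofReal q) μ,
        (F : EuclideanSpace ℝ (Fin N) → ℝ) =ᵐ[μ]
          (fun x => |y x| ^ (p - 2) * y x + |z x| ^ (p - 2) * z x) ∧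
        z + B F = g}) :
    ∀ zs : ℕ → Lp ℝ (ENNReal.ofReal p) μ, (∀ k, zs k ∈ H) →
      ∃ zlim ∈ H, ∃ φ : ℕ → ℕ, StrictMono φ ∧
        Tendsto (fun j => ‖zs (φ j) - zlim‖) atTop (𝓝 0) := by
  intro zs hzs
  have huniq : ∀ z₁ ∈ H, ∀ z₂ ∈ H, z₁ = z₂ := by
    intro z₁ h₁ z₂ h₂
    rw [hH] at h₁ h₂
    obtain ⟨F₁, hF₁, e₁⟩ := h₁
    obtain ⟨F₂, hF₂, e₂⟩ := h₂
    have hB : B (F₁ - F₂) = z₂ - z₁ := by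
      rw [map_sub, eq_sub_of_add_eq' e₁, eq_sub_of_add_eq' e₂]
      abel
    have hF : F₁ = F₂ := by
      by_contra hne
      have hpos := hBstrict (F₁ - F₂) (sub_ne_zero.mpr hne)
      rw [hB] at hpos
      refine absurd hpos (not_lt.mpr (integral_nonpos_of_ae ?_))
      filter_upwards [hF₁, hF₂, Lp.coeFn_sub F₁ F₂, Lp.coeFn_sub z₂ z₁] with x a1 a2 a3 a4
      rw [a3, a4]
      simp only [Pi.sub_apply, Pi.zero_apply]
      rw [a1, a2]
      have := mono_aux (p - 2) (z₁ x) (z₂ x) (by linarith)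
      nlinarith
    subst hF
    exact add_right_cancel (e₁.trans e₂.symm)
  refine ⟨zs 0, hzs 0, id, strictMono_id, ?_⟩
  have : (fun j => ‖zs (id j) - zs 0‖) = fun _ => (0 : ℝ) := by
    funext j
    rw [huniq _ (hzs (id j)) _ (hzs 0), sub_self, norm_zero]
  rw [this]
  exact tendsto_const_nhds
end

section
/- Let Ω ⊆ ℝ^N be a bounded open set, p ≥ 2 a real number and q = p/(p−1). Let B : L^q(Ω) → L^p(Ω) be a strictly positive continuous linear operator, let g ∈ L^p(Ω) and h ∈ L^q(Ω) satisfy B h = g, and let F : L^p(Ω) → L^q(Ω) be any map. Assume there is λ > 0 such that ∫_Ω (F(z) − h) z dx ≥ 0 for every z ∈ L^p(Ω) with ‖z‖_p > λ. Then every solution z ∈ L^p(Ω) of the Hammerstein equation z + B(F(z)) = g satisfies the a priori bound ‖z‖_p ≤ λ. -/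
open MeasureTheory Filter Topology

/-- A priori bound for solutions of the Hammerstein equation `z + B(F z) = g`:
if `B` is a strictly positive continuous linear operator, `B h = g`, and
`∫ (F z − h) z dx ≥ 0` whenever `‖z‖_p > λ`, then every solution satisfies `‖z‖_p ≤ λ`. -/
theorem hammerstein_apriori_bound
    {N : ℕ} (hN : 1 ≤ N)
    (Ω : Set (EuclideanSpace ℝ (Fin N))) (hΩo : IsOpen Ω)
    (hΩb : Bornology.IsBounded Ω)
    (p q : ℝ) (hp : 2 ≤ p) (hq : q = p / (p - 1))
    [Fact (1 ≤ ENNReal.ofReal p)] [Fact (1 ≤ ENNReal.ofReal q)]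
    (μ : Measure (EuclideanSpace ℝ (Fin N))) (hμ : μ = volume.restrict Ω)
    (B : Lp ℝ (ENNReal.ofReal q) μ →L[ℝ] Lp ℝ (ENNReal.ofReal p) μ)
    -- B is strictly positive
    (hBpos : ∀ w : Lp ℝ (ENNReal.ofReal q) μ, 0 ≤ ∫ x, (B w) x * w x ∂μ)
    (hBstrict : ∀ w : Lp ℝ (ENNReal.ofReal q) μ, w ≠ 0 → 0 < ∫ x, (B w) x * w x ∂μ)
    (g : Lp ℝ (ENNReal.ofReal p) μ) (h : Lp ℝ (ENNReal.ofReal q) μ)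
    (hBh : B h = g)
    (F : Lp ℝ (ENNReal.ofReal p) μ → Lp ℝ (ENNReal.ofReal q) μ)
    (lam : ℝ) (hlam : 0 < lam)
    -- coercivity: ∫ (F(z) − h) z dx ≥ 0 whenever ‖z‖_p > λ
    (hcoerc : ∀ z : Lp ℝ (ENNReal.ofReal p) μ, lam < ‖z‖ →
      0 ≤ ∫ x, ((F z) x - h x) * z x ∂μ) :
    ∀ z : Lp ℝ (ENNReal.ofReal p) μ, z + B (F z) = g → ‖z‖ ≤ lam := by
  intro z hz
  by_contra hcon
  have hlt : lam < ‖z‖ := not_le.mp hcon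
  have hzB : z = B (h - F z) := by
    rw [map_sub, hBh, ← hz]; abel
  have hw : h - F z ≠ 0 := by
    intro h0
    rw [h0, map_zero] at hzB
    rw [hzB, norm_zero] at hlt
    exact absurd hlt (not_lt.mpr hlam.le)
  have h1 := hBstrict _ hw
  rw [← hzB] at h1
  have h2 := hcoerc z hlt
  have h3 : ∫ x, z x * (h - F z : Lp ℝ (ENNReal.ofReal q) μ) x ∂μ
      = - ∫ x, ((F z) x - h x) * z x ∂μ := by
    rw [← integral_neg]
    apply integral_congr_ae
    filter_upwards [Lp.coeFn_sub h (F z)] with x hx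
    rw [hx, Pi.sub_apply]; ring
  linarith
end

section
/- Let Ω ⊆ ℝ^N be a bounded open set and p ≥ 2 a real number. Suppose (y_k) and (z_k) are sequences in L^p(Ω) with y_k → y strongly in L^p(Ω) and z_k → z weakly in L^p(Ω), and that lim_{k→∞} ∫_Ω (|y_k|^{p−2}y_k + |z_k|^{p−2}z_k) z_k dx = ∫_Ω (|y|^{p−2}y + |z|^{p−2}z) z dx. Then z_k → z strongly in L^p(Ω). (This is the (𝔐)-property of the operator F(y,z) = |y|^{p−2}y + |z|^{p−2}z.) -/
open MeasureTheory Filter Topology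

lemma fm_abs_J {p : ℝ} (hp : 2 ≤ p) (b : ℝ) : |(|b| ^ (p-2) * b)| = |b| ^ (p-1) := by
  rw [abs_mul, abs_of_nonneg (Real.rpow_nonneg (abs_nonneg b) _)]
  rcases eq_or_ne b 0 with rfl | hb
  · simp [Real.zero_rpow (by linarith : p - 1 ≠ 0)]
  · rw [← Real.rpow_add_one (abs_ne_zero.2 hb)]; congr 1; ring

lemma fm_J_mul {p : ℝ} (hp : 2 ≤ p) (b : ℝ) : |b| ^ (p-2) * b * b = |b| ^ p := by
  rcases eq_or_ne b 0 with rfl | hb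
  · simp [Real.zero_rpow (by linarith : p ≠ 0)]
  · rw [mul_assoc, ← abs_mul_abs_self b, ← mul_assoc, ← Real.rpow_add_one (abs_ne_zero.2 hb), ← Real.rpow_add_one (abs_ne_zero.2 hb)]; congr 1; ring

lemma fm_young {p : ℝ} (hp : 2 ≤ p) (a b : ℝ) :
    p * (|b| ^ (p-2) * b * a) ≤ |a| ^ p + (p-1) * |b| ^ p := by
  have hc : p.HolderConjugate (p / (p-1)) :=
    Real.HolderConjugate.conjExponent (by linarith)
  have h := Real.young_inequality a (|b| ^ (p-2) * b) hc
  rw [fm_abs_J hp, ← Real.rpow_mul (abs_nonneg b)] at h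
  have h1 : p - 1 ≠ 0 := by linarith
  rw [mul_div_cancel₀ _ h1] at h
  have h3 := mul_le_mul_of_nonneg_left h (by linarith : 0 ≤ p)
  have h4 : p * (|a| ^ p / p + |b| ^ p / (p / (p-1))) = |a| ^ p + (p-1) * |b| ^ p := by
    have : p ≠ 0 := by linarith
    field_simp
  linarith

lemma fm_abs_young {p : ℝ} (hp : 2 ≤ p) (a b : ℝ) :
    p * |(|b| ^ (p-2) * b * a)| ≤ |a| ^ p + (p-1) * |b| ^ p := by
  rcases abs_cases (|b| ^ (p-2) * b * a) with h | h
  · rw [h.1]; exact fm_young hp a b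
  · rw [h.1]; have := fm_young hp (-a) b
    rw [abs_neg] at this; linarith

lemma fm_clarkson {p : ℝ} (hp : 2 ≤ p) (a b : ℝ) :
    |(a+b)/2| ^ p + |(a-b)/2| ^ p ≤ (|a| ^ p + |b| ^ p) / 2 := by
  have e : ∀ x : ℝ, |x| ^ p = (x^2) ^ (p/2) := by
    intro x
    rw [← sq_abs, ← Real.rpow_natCast, ← Real.rpow_mul (abs_nonneg x)]; congr 1; push_cast; ring
  rw [e, e, e, e]
  have h1 := Real.add_rpow_le_rpow_add (sq_nonneg ((a+b)/2)) (sq_nonneg ((a-b)/2)) (by linarith : 1 ≤ p/2)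
  have h2 := (convexOn_rpow (by linarith : 1 ≤ p/2)).2 (Set.mem_Ici.2 (sq_nonneg a)) (Set.mem_Ici.2 (sq_nonneg b)) (by norm_num : (0:ℝ) ≤ 1/2) (by norm_num : (0:ℝ) ≤ 1/2) (by norm_num)
  simp only [smul_eq_mul] at h2
  have h3 : ((a+b)/2)^2 + ((a-b)/2)^2 = 1/2 * a^2 + 1/2*b^2 := by ring
  rw [h3] at h1
  linarith

lemma fm_conv {p : ℝ} (hp : 2 ≤ p) (a b : ℝ) :
    2 * (2⁻¹ ^ p * |a-b| ^ p) ≤ |a| ^ p - |b| ^ p - p * (|b| ^ (p-2) * b * a - |b| ^ (p-2) * b * b) := by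
  have h1 := fm_clarkson hp a b
  have h2 := fm_young hp ((a+b)/2) b
  have h3 : |(a-b)/2| ^ p = 2⁻¹ ^ p * |a-b| ^ p := by
    rw [← Real.mul_rpow (by norm_num) (abs_nonneg _)]; congr 1
    rw [abs_div, abs_of_pos (by norm_num : (0:ℝ) < 2)]; ring
  have h4 := fm_J_mul hp b
  rw [← h3]
  have : p * (|b| ^ (p-2) * b * ((a+b)/2)) = p * (|b| ^ (p-2) * b * a)/2 + p * |b| ^ p / 2 := by
    rw [← h4]; ring
  rw [h4]
  linarith

lemma fm_lip0 {r : ℝ} (hr : 1 ≤ r) {a b : ℝ} (hb : 0 ≤ b) (hab : b ≤ a) :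
    a ^ r - b ^ r ≤ r * (a - b) * a ^ (r-1) := by
  rcases eq_or_lt_of_le (hb.trans hab) with h | h
  · have : b = 0 := by linarith
    subst this; subst h; simp
  · have h1 := one_add_mul_self_le_rpow_one_add (s := b/a - 1) (by linarith [div_nonneg hb h.le]) hr
    have h2 : 1 + (b/a-1) = b / a := by ring
    rw [h2, Real.div_rpow hb h.le, le_div_iff₀ (Real.rpow_pos_of_pos h r)] at h1
    have h3 : a ^ r = a * a ^ (r-1) := by
      rw [mul_comm, ← Real.rpow_add_one h.ne']; congr 1; ring
    have h4 : (1 + r * (b/a-1)) * a ^ r = a ^ r - r * (a-b) * a ^ (r-1) := by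
      rw [h3]; field_simp; ring
    linarith

lemma fm_J_nonneg {p : ℝ} (hp : 2 ≤ p) {b : ℝ} (hb : 0 ≤ b) : |b| ^ (p-2) * b = b ^ (p-1) := by
  have h := fm_abs_J hp b
  rw [abs_of_nonneg (by positivity)] at h
  rw [h, abs_of_nonneg hb]

lemma fm_J_neg (p : ℝ) (b : ℝ) : |-b| ^ (p-2) * (-b) = -(|b| ^ (p-2) * b) := by
  rw [abs_neg]; ring

lemma fm_lip {p : ℝ} (hp : 2 ≤ p) (a b : ℝ) :
    |(|a| ^ (p-2) * a - |b| ^ (p-2) * b)| ≤ (p-1) * |a-b| * (|a|+|b|) ^ (p-2) := by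
  have hp1 : p - 1 - 1 = p - 2 := by ring
  -- nonneg case, ordered
  have key1 : ∀ a b : ℝ, 0 ≤ b → b ≤ a →
      |(|a| ^ (p-2) * a - |b| ^ (p-2) * b)| ≤ (p-1) * |a-b| * (|a|+|b|) ^ (p-2) := by
    intro a b hb hab
    have ha := hb.trans hab
    rw [fm_J_nonneg hp ha, fm_J_nonneg hp hb,
      abs_of_nonneg (sub_nonneg.2 (Real.rpow_le_rpow hb hab (by linarith))),
      abs_of_nonneg (sub_nonneg.2 hab), abs_of_nonneg ha, abs_of_nonneg hb]
    refine (fm_lip0 (by linarith) hb hab).trans ?_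
    rw [hp1]
    exact mul_le_mul_of_nonneg_left (Real.rpow_le_rpow ha (by linarith) (by linarith))
      (mul_nonneg (by linarith) (by linarith))
  have key2 : ∀ a b : ℝ, 0 ≤ a → b ≤ 0 →
      |(|a| ^ (p-2) * a - |b| ^ (p-2) * b)| ≤ (p-1) * |a-b| * (|a|+|b|) ^ (p-2) := by
    intro a b ha hb
    obtain ⟨c, rfl⟩ : ∃ c, b = -c := ⟨-b, by simp⟩
    have hc : 0 ≤ c := by linarith
    rw [fm_J_neg, fm_J_nonneg hp ha, fm_J_nonneg hp hc, abs_neg, abs_of_nonneg ha, abs_of_nonneg hc,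
      sub_neg_eq_add, sub_neg_eq_add, abs_of_nonneg (by positivity), abs_of_nonneg (by positivity)]
    refine (Real.add_rpow_le_rpow_add ha hc (by linarith)).trans ?_
    have h5 := fm_J_nonneg hp (add_nonneg ha hc)
    rw [abs_of_nonneg (add_nonneg ha hc)] at h5
    rw [← h5]
    have : 0 ≤ (a+c)^(p-2) * (a+c) := by positivity
    nlinarith
  have symm : ∀ a b : ℝ, |(|a| ^ (p-2) * a - |b| ^ (p-2) * b)| ≤ (p-1) * |a-b| * (|a|+|b|) ^ (p-2) →
      |(|b| ^ (p-2) * b - |a| ^ (p-2) * a)| ≤ (p-1) * |b-a| * (|b|+|a|) ^ (p-2) := by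
    intro a b h
    rwa [abs_sub_comm, abs_sub_comm b a, add_comm]
  rcases le_total 0 a with ha | ha <;> rcases le_total 0 b with hb | hb
  · rcases le_total a b with h | h
    · exact symm _ _ (key1 b a ha h)
    · exact key1 a b hb h
  · exact key2 a b ha hb
  · exact symm _ _ (key2 b a hb ha)
  · have neg : |(|-a| ^ (p-2) * (-a) - |-b| ^ (p-2) * (-b))| ≤ (p-1) * |(-a)-(-b)| * (|-a|+|-b|) ^ (p-2) := by
      rcases le_total a b with h | h
      · exact key1 _ _ (by linarith) (by linarith)
      · exact symm _ _ (key1 _ _ (by linarith) (by linarith))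
    rw [fm_J_neg, fm_J_neg, abs_neg, abs_neg, ← neg_sub', abs_neg, ← neg_sub', abs_neg] at neg
    exact neg

lemma fm_lipc {p : ℝ} (hp : 2 ≤ p) (a b c : ℝ) :
    |(|a| ^ (p-2) * a * c - |b| ^ (p-2) * b * c)| ≤ (p-1) * (|a-b| * (|a|+|b|+|c|) ^ (p-1)) := by
  rw [← sub_mul, abs_mul]
  have h5 := fm_J_nonneg hp (by positivity : 0 ≤ |a|+|b|+|c|)
  rw [abs_of_nonneg (by positivity)] at h5
  rw [← h5]
  calc _ ≤ ((p-1) * |a-b| * (|a|+|b|) ^ (p-2)) * |c| :=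
        mul_le_mul_of_nonneg_right (fm_lip hp a b) (abs_nonneg _)
    _ ≤ ((p-1) * |a-b| * (|a|+|b|+|c|) ^ (p-2)) * (|a|+|b|+|c|) := by
        have : 0 ≤ p - 1 := by linarith
        have : 0 ≤ p - 2 := by linarith
        have h7 : (|a|+|b|) ^ (p-2) ≤ (|a|+|b|+|c|) ^ (p-2) :=
          Real.rpow_le_rpow (by positivity) (by linarith [abs_nonneg c]) this
        exact mul_le_mul (mul_le_mul_of_nonneg_left h7 (by positivity))
          (by linarith [abs_nonneg a, abs_nonneg b]) (abs_nonneg c) (by positivity)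
    _ = _ := by ring

lemma fm_T {p : ℝ} (hp : 2 ≤ p) {a b c : ℝ} (ha : 0 ≤ a) (hb : 0 ≤ b) (hc : 0 ≤ c) :
    (a+b+c) ^ p ≤ 3 ^ p * (a ^ p + b ^ p + c ^ p) := by
  have hm : ∃ m, (0 ≤ m) ∧ a ≤ m ∧ b ≤ m ∧ c ≤ m ∧ m ^ p ≤ a ^ p + b ^ p + c ^ p := by
    have := Real.rpow_nonneg ha p
    have := Real.rpow_nonneg hb p
    have := Real.rpow_nonneg hc p
    rcases le_total a b with h1 | h1 <;> rcases le_total b c with h2 | h2 <;>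
      rcases le_total a c with h3 | h3
    all_goals first
      | exact ⟨a, by linarith, by linarith, by linarith, by linarith, by linarith⟩
      | exact ⟨b, by linarith, by linarith, by linarith, by linarith, by linarith⟩
      | exact ⟨c, by linarith, by linarith, by linarith, by linarith, by linarith⟩
  obtain ⟨m, h0, h1, h2, h3, h4⟩ := hm
  calc (a+b+c)^p ≤ (3*m)^p := Real.rpow_le_rpow (by positivity) (by linarith) (by linarith)
    _ = 3^p * m^p := Real.mul_rpow (by norm_num) h0
    _ ≤ _ := by gcongr

lemma fm_norm {X : Type*} [MeasurableSpace X] {μ : Measure X} {p : ℝ} (hp : 2 ≤ p)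
    (f : Lp ℝ (ENNReal.ofReal p) μ) : ‖f‖ = (∫ x, |f x| ^ p ∂μ) ^ p⁻¹ := by
  rw [Lp.norm_def, MemLp.eLpNorm_eq_integral_rpow_norm (by simp; linarith) (by simp) (Lp.memLp f),
    ENNReal.toReal_ofReal (by positivity), ENNReal.toReal_ofReal (by linarith)]
  rfl

lemma fm_normp {X : Type*} [MeasurableSpace X] {μ : Measure X} {p : ℝ} (hp : 2 ≤ p)
    (f : Lp ℝ (ENNReal.ofReal p) μ) : ∫ x, |f x| ^ p ∂μ = ‖f‖ ^ p := by
  rw [fm_norm hp, Real.rpow_inv_rpow (by positivity) (by linarith)]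

lemma fm_int {X : Type*} [MeasurableSpace X] {μ : Measure X} {p : ℝ} (hp : 2 ≤ p)
    {f : X → ℝ} (hf : MemLp f (ENNReal.ofReal p) μ) : Integrable (fun x => |f x| ^ p) μ := by
  have := hf.integrable_norm_rpow (by simp; linarith) (by simp)
  rwa [ENNReal.toReal_ofReal (by linarith)] at this

lemma fm_J_meas {X : Type*} [MeasurableSpace X] {μ : Measure X} (p : ℝ)
    {f : X → ℝ} (hf : AEStronglyMeasurable f μ) :
    AEStronglyMeasurable (fun x => |f x| ^ (p-2) * f x) μ := by
  have := hf.aemeasurable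
  exact AEMeasurable.aestronglyMeasurable (by fun_prop)

lemma fm_int_mul {X : Type*} [MeasurableSpace X] {μ : Measure X} {p : ℝ} (hp : 2 ≤ p)
    {f g : X → ℝ} (hf : MemLp f (ENNReal.ofReal p) μ) (hg : MemLp g (ENNReal.ofReal p) μ) :
    Integrable (fun x => |f x| ^ (p-2) * f x * g x) μ := by
  refine Integrable.mono' ((fm_int hp hg).add ((fm_int hp hf).const_mul (p-1)))
    ((fm_J_meas p hf.1).mul hg.1) (Eventually.of_forall fun x => ?_)
  have h := fm_abs_young hp (g x) (f x)
  simp only [Pi.add_apply, Real.norm_eq_abs]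
  nlinarith [abs_nonneg (|f x| ^ (p-2) * f x * g x)]

lemma fm_J_memLp {X : Type*} [MeasurableSpace X] {μ : Measure X} {p : ℝ} (hp : 2 ≤ p)
    {f : X → ℝ} (hf : MemLp f (ENNReal.ofReal p) μ) :
    MemLp (fun x => |f x| ^ (p-2) * f x) (ENNReal.ofReal (p/(p-1))) μ := by
  have hq : 0 < p / (p-1) := div_pos (by linarith) (by linarith)
  rw [← integrable_norm_rpow_iff (fm_J_meas p hf.1) (by simpa using hq) (by simp),
    ENNReal.toReal_ofReal hq.le]
  simp only [Real.norm_eq_abs, fm_abs_J hp]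
  have h1 : p - 1 ≠ 0 := by linarith
  simp only [← Real.rpow_mul (abs_nonneg _), mul_div_cancel₀ _ h1]
  exact fm_int hp hf

lemma fm_holder {X : Type*} [MeasurableSpace X] {μ : Measure X} {p : ℝ} (hp : 2 ≤ p)
    {f g h : X → ℝ} (hf : MemLp f (ENNReal.ofReal p) μ) (hg : MemLp g (ENNReal.ofReal p) μ)
    (hh : MemLp h (ENNReal.ofReal p) μ) :
    |∫ x, |f x| ^ (p-2) * f x * h x ∂μ - ∫ x, |g x| ^ (p-2) * g x * h x ∂μ| ≤
      (p-1) * ((∫ x, |f x - g x| ^ p ∂μ) ^ (1/p) *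
        (3 ^ p * (∫ x, |f x| ^ p ∂μ + ∫ x, |g x| ^ p ∂μ + ∫ x, |h x| ^ p ∂μ)) ^ (1/(p/(p-1)))) := by
  have hc : p.HolderConjugate (p / (p-1)) :=
    Real.HolderConjugate.conjExponent (by linarith)
  have hq : 0 < p / (p-1) := div_pos (by linarith) (by linarith)
  have hT : MemLp (fun x => |f x| + |g x| + |h x|) (ENNReal.ofReal p) μ :=
    (hf.abs.add hg.abs).add hh.abs
  have hs : MemLp (fun x => |f x - g x|) (ENNReal.ofReal p) μ := (hf.sub hg).abs
  have h1 : p - 1 ≠ 0 := by linarith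
  have hT0 : ∀ x, 0 ≤ |f x| + |g x| + |h x| := fun x => by positivity
  have hT1 : MemLp (fun x => (|f x| + |g x| + |h x|) ^ (p-1)) (ENNReal.ofReal (p/(p-1))) μ := by
    have := (fm_J_memLp hp hT)
    simpa only [fm_J_nonneg hp (hT0 _)] using this
  have hH := integral_mul_le_Lp_mul_Lq_of_nonneg hc (μ := μ)
    (Eventually.of_forall fun x => abs_nonneg (f x - g x))
    (Eventually.of_forall fun x => Real.rpow_nonneg (hT0 x) (p-1)) hs hT1
  have hI : Integrable (fun x => |f x - g x| * (|f x| + |g x| + |h x|) ^ (p-1)) μ := by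
    have := fm_int_mul hp hT hs
    simp only [fm_J_nonneg hp (hT0 _)] at this
    simpa only [mul_comm] using this
  have hT2 : ∀ x, ((|f x| + |g x| + |h x|) ^ (p-1)) ^ (p/(p-1)) = (|f x| + |g x| + |h x|) ^ p := by
    intro x
    rw [← Real.rpow_mul (hT0 x), mul_div_cancel₀ _ h1]
  simp only [hT2] at hH
  have hTi : ∫ x, (|f x| + |g x| + |h x|) ^ p ∂μ ≤
      3 ^ p * (∫ x, |f x| ^ p ∂μ + ∫ x, |g x| ^ p ∂μ + ∫ x, |h x| ^ p ∂μ) := by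
    have i6 : Integrable (fun x => |f x| ^ p + |g x| ^ p) μ := (fm_int hp hf).add (fm_int hp hg)
    rw [← integral_add (fm_int hp hf) (fm_int hp hg),
      ← integral_add i6 (fm_int hp hh), ← integral_const_mul]
    refine integral_mono ?_ ((((fm_int hp hf).add (fm_int hp hg)).add (fm_int hp hh)).const_mul _)
      fun x => fm_T hp (abs_nonneg _) (abs_nonneg _) (abs_nonneg _)
    have := fm_int hp hT
    simpa only [abs_of_nonneg (hT0 _)] using this
  rw [← integral_sub (fm_int_mul hp hf hh) (fm_int_mul hp hg hh)]
  refine (abs_integral_le_integral_abs).trans ?_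
  calc _ ≤ ∫ x, (p-1) * (|f x - g x| * (|f x| + |g x| + |h x|) ^ (p-1)) ∂μ :=
        integral_mono ((fm_int_mul hp hf hh).sub (fm_int_mul hp hg hh)).abs (hI.const_mul _)
          fun x => fm_lipc hp _ _ _
    _ = (p-1) * ∫ x, (|f x - g x| * (|f x| + |g x| + |h x|) ^ (p-1)) ∂μ := integral_const_mul _ _
    _ ≤ _ := by
      refine mul_le_mul_of_nonneg_left (hH.trans ?_) (by linarith)
      refine mul_le_mul_of_nonneg_left ?_ (by positivity)
      exact Real.rpow_le_rpow (integral_nonneg fun x => Real.rpow_nonneg (hT0 x) _) hTi (by positivity)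

/-- the (𝔐)-property of `F(y,z) = |y|^{p-2}y + |z|^{p-2}z`: if `y_k → y` strongly
in `L^p`, `z_k → z` weakly in `L^p`, and `∫ F(y_k,z_k) z_k dx → ∫ F(y,z) z dx`, then
`z_k → z` strongly in `L^p`. -/
theorem F_M_property
    {N : ℕ} (hN : 1 ≤ N)
    (Ω : Set (EuclideanSpace ℝ (Fin N))) (hΩo : IsOpen Ω)
    (hΩb : Bornology.IsBounded Ω)
    (p q : ℝ) (hp : 2 ≤ p) (hq : q = p / (p - 1))
    [Fact (1 ≤ ENNReal.ofReal p)] [Fact (1 ≤ ENNReal.ofReal q)]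
    (μ : Measure (EuclideanSpace ℝ (Fin N))) (hμ : μ = volume.restrict Ω)
    (y z : ℕ → Lp ℝ (ENNReal.ofReal p) μ)
    (y₀ z₀ : Lp ℝ (ENNReal.ofReal p) μ)
    -- strong convergence y_k → y₀ in L^p
    (hy : Tendsto (fun k => ‖y k - y₀‖) atTop (𝓝 0))
    -- weak convergence z_k → z₀ in L^p
    (hz : ∀ w : Lp ℝ (ENNReal.ofReal q) μ,
      Tendsto (fun k => ∫ x, (z k) x * w x ∂μ) atTop (𝓝 (∫ x, z₀ x * w x ∂μ)))
    -- convergence of the pairings ⟨F(y_k,z_k), z_k⟩ → ⟨F(y₀,z₀), z₀⟩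
    (hpair : Tendsto
      (fun k => ∫ x, (|(y k) x| ^ (p - 2) * (y k) x + |(z k) x| ^ (p - 2) * (z k) x) * (z k) x ∂μ)
      atTop
      (𝓝 (∫ x, (|y₀ x| ^ (p - 2) * y₀ x + |z₀ x| ^ (p - 2) * z₀ x) * z₀ x ∂μ))) :
    Tendsto (fun k => ‖z k - z₀‖) atTop (𝓝 0) := by
  subst hq
  have hp0 : 0 < p := by linarith
  have hp1 : 0 < p - 1 := by linarith
  have mem := fun f : Lp ℝ (ENNReal.ofReal p) μ => Lp.memLp f
  -- weak convergence tested against J f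
  have weak : ∀ f : Lp ℝ (ENNReal.ofReal p) μ,
      Tendsto (fun k => ∫ x, |f x| ^ (p-2) * f x * z k x ∂μ) atTop
        (𝓝 (∫ x, |f x| ^ (p-2) * f x * z₀ x ∂μ)) := by
    intro f
    have hJ := fm_J_memLp hp (mem f)
    have e : ∀ g : Lp ℝ (ENNReal.ofReal p) μ,
        ∫ x, g x * (hJ.toLp _) x ∂μ = ∫ x, |f x| ^ (p-2) * f x * g x ∂μ := by
      intro g
      refine integral_congr_ae ?_
      filter_upwards [hJ.coeFn_toLp] with x hx
      rw [hx, mul_comm]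
    have := hz (hJ.toLp _)
    simpa only [e] using this
  have split : ∀ f g : Lp ℝ (ENNReal.ofReal p) μ,
      ∫ x, (|f x| ^ (p - 2) * f x + |g x| ^ (p - 2) * g x) * g x ∂μ =
        ∫ x, |f x| ^ (p-2) * f x * g x ∂μ + ∫ x, |g x| ^ p ∂μ := by
    intro f g
    rw [← integral_add (fm_int_mul hp (mem f) (mem g)) (fm_int hp (mem g))]
    refine integral_congr_ae (Eventually.of_forall fun x => ?_)
    simp only
    rw [add_mul, fm_J_mul hp]
  simp only [split] at hpair
  have subint : ∀ f g : Lp ℝ (ENNReal.ofReal p) μ, ∫ x, |f x - g x| ^ p ∂μ = ‖f - g‖ ^ p := by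
    intro f g
    rw [← fm_normp hp]
    refine integral_congr_ae ?_
    filter_upwards [Lp.coeFn_sub f g] with x hx
    rw [hx]; rfl
  have hD : Tendsto (fun k => (∫ x, |y k x - y₀ x| ^ p ∂μ) ^ (1/p)) atTop (𝓝 0) := by
    have : ∀ k, (∫ x, |y k x - y₀ x| ^ p ∂μ) ^ (1/p) = ‖y k - y₀‖ := by
      intro k
      rw [subint, one_div, Real.rpow_rpow_inv (norm_nonneg _) hp0.ne']
    simpa only [this] using hy
  have hY : Tendsto (fun k => ∫ x, |y k x| ^ p ∂μ) atTop (𝓝 (∫ x, |y₀ x| ^ p ∂μ)) := by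
    simp only [fm_normp hp]
    exact ((tendsto_iff_norm_sub_tendsto_zero.2 hy).norm).rpow_const (Or.inr hp0.le)
  -- boundedness
  have hA : ∀ k, ∫ x, |z k x| ^ p ∂μ ≤
      p / (p-1) * (∫ x, |y k x| ^ (p-2) * y k x * z k x ∂μ + ∫ x, |z k x| ^ p ∂μ)
        + ∫ x, |y k x| ^ p ∂μ := by
    intro k
    have h : ∫ x, -(|z k x| ^ p + (p-1) * |y k x| ^ p) ∂μ ≤
        ∫ x, p * (|y k x| ^ (p-2) * y k x * z k x) ∂μ := by
      refine integral_mono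
        ((fm_int hp (mem (z k))).add ((fm_int hp (mem (y k))).const_mul _)).neg
        ((fm_int_mul hp (mem (y k)) (mem (z k))).const_mul p) fun x => ?_
      have h1 := fm_abs_young hp (z k x) (y k x)
      have h2 := mul_le_mul_of_nonneg_left (neg_abs_le (|y k x| ^ (p-2) * y k x * z k x)) hp0.le
      simp only
      linarith
    rw [integral_neg, integral_add (fm_int hp (mem (z k))) ((fm_int hp (mem (y k))).const_mul _),
      integral_const_mul, integral_const_mul] at h
    rw [div_mul_eq_mul_div, ← sub_le_iff_le_add, le_div_iff₀ hp1]
    linarith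
  have hU : Tendsto (fun k => (p-1) * ((∫ x, |y k x - y₀ x| ^ p ∂μ) ^ (1/p) *
        (3 ^ p * (∫ x, |y k x| ^ p ∂μ + ∫ x, |y₀ x| ^ p ∂μ +
        (p / (p-1) * (∫ x, |y k x| ^ (p-2) * y k x * z k x ∂μ + ∫ x, |z k x| ^ p ∂μ)
        + ∫ x, |y k x| ^ p ∂μ))) ^ (1/(p/(p-1))))) atTop (𝓝 0) := by
    have h := (hD.mul ((((hY.add_const (∫ x, |y₀ x| ^ p ∂μ)).add
      ((hpair.const_mul (p/(p-1))).add hY)).const_mul (3 ^ p)).rpow_const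
        (p := 1/(p/(p-1))) (Or.inr (by positivity)))).const_mul (p-1)
    simpa only [zero_mul, mul_zero] using h
  have hB0 : Tendsto (fun k => ∫ x, |y k x| ^ (p-2) * y k x * z k x ∂μ -
      ∫ x, |y₀ x| ^ (p-2) * y₀ x * z k x ∂μ) atTop (𝓝 0) := by
    refine squeeze_zero_norm (fun k => ?_) hU
    rw [Real.norm_eq_abs]
    refine (fm_holder hp (mem (y k)) (mem y₀) (mem (z k))).trans ?_
    have n1 : 0 ≤ ∫ x, |y k x| ^ p ∂μ := integral_nonneg fun x => by positivity
    have n2 : 0 ≤ ∫ x, |y₀ x| ^ p ∂μ := integral_nonneg fun x => by positivity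
    have n3 : 0 ≤ ∫ x, |z k x| ^ p ∂μ := integral_nonneg fun x => by positivity
    refine mul_le_mul_of_nonneg_left (mul_le_mul_of_nonneg_left ?_ (by positivity)) hp1.le
    refine Real.rpow_le_rpow (by positivity) (mul_le_mul_of_nonneg_left ?_ (by positivity))
      (by positivity)
    linarith [hA k]
  have hAk : Tendsto (fun k => ∫ x, |z k x| ^ p ∂μ) atTop (𝓝 (∫ x, |z₀ x| ^ p ∂μ)) := by
    have h := (hpair.sub hB0).sub (weak y₀)
    have e : ∫ x, |y₀ x| ^ (p-2) * y₀ x * z₀ x ∂μ + ∫ x, |z₀ x| ^ p ∂μ - 0 -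
        ∫ x, |y₀ x| ^ (p-2) * y₀ x * z₀ x ∂μ = ∫ x, |z₀ x| ^ p ∂μ := by ring
    rw [e] at h
    exact h.congr fun k => by ring
  have hfin : Tendsto (fun k => (2 * 2⁻¹ ^ p)⁻¹ * (∫ x, |z k x| ^ p ∂μ - ∫ x, |z₀ x| ^ p ∂μ -
      p * (∫ x, |z₀ x| ^ (p-2) * z₀ x * z k x ∂μ - ∫ x, |z₀ x| ^ (p-2) * z₀ x * z₀ x ∂μ)))
      atTop (𝓝 0) := by
    have h := ((hAk.sub_const (∫ x, |z₀ x| ^ p ∂μ)).sub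
      (((weak z₀).sub_const (∫ x, |z₀ x| ^ (p-2) * z₀ x * z₀ x ∂μ)).const_mul p)).const_mul
        ((2 * (2⁻¹:ℝ) ^ p)⁻¹)
    simpa only [sub_self, mul_zero] using h
  have hle : ∀ k, ‖z k - z₀‖ ^ p ≤ (2 * 2⁻¹ ^ p)⁻¹ * (∫ x, |z k x| ^ p ∂μ - ∫ x, |z₀ x| ^ p ∂μ -
      p * (∫ x, |z₀ x| ^ (p-2) * z₀ x * z k x ∂μ - ∫ x, |z₀ x| ^ (p-2) * z₀ x * z₀ x ∂μ)) := by
    intro k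
    have i1 := fm_int hp (mem (z k))
    have i2 := fm_int hp (mem z₀)
    have i3 := fm_int_mul hp (mem z₀) (mem (z k))
    have i4 := fm_int_mul hp (mem z₀) (mem z₀)
    have i5 := fm_int hp ((mem (z k)).sub (mem z₀))
    have i6 : Integrable (fun x => |z k x| ^ p - |z₀ x| ^ p) μ := i1.sub i2
    have i7 : Integrable (fun x => p * (|z₀ x| ^ (p-2) * z₀ x * z k x -
      |z₀ x| ^ (p-2) * z₀ x * z₀ x)) μ := (i3.sub i4).const_mul p
    rw [← subint, ← integral_sub i1 i2, ← integral_sub i3 i4, ← integral_const_mul p,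
      ← integral_sub i6 i7, ← integral_const_mul]
    refine integral_mono i5 ((i6.sub i7).const_mul _) fun x => ?_
    have h := fm_conv hp (z k x) (z₀ x)
    simp only
    rw [le_inv_mul_iff₀ (by positivity), mul_assoc]
    exact h
  have hz' : Tendsto (fun k => ‖z k - z₀‖ ^ p) atTop (𝓝 0) :=
    squeeze_zero (fun k => by positivity) hle hfin
  have h := hz'.rpow_const (p := p⁻¹) (Or.inr (by positivity))
  rw [Real.zero_rpow (by positivity)] at h
  simpa only [Real.rpow_rpow_inv (norm_nonneg _) hp0.ne'] using h
end
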